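/- Let n ≥ 2, α ∈ (0,1), and let {u_k} be a bounded sequence in H^α(ℝⁿ) such that lim_{k→∞} sup_{y∈ℝⁿ} ∫_{B(y,R)} |u_k|² dx = 0 for some R > 0. Then u_k → 0 in L^q(ℝⁿ) for every q ∈ (2, 2n/(n−2α)). -/

import Mathlib

open MeasureTheory Filter Topology Set Metric
open scoped ENNReal

/-!
If `{‖u‖ ≥ t}` fills at most half of every ball of radius `r`, then the other half of the `r`-ball
around a point with `‖u‖ ≥ 2t` contributes at least a multiple of `t ^ p / r ^ (p * s)` to the
Gagliardo energy, so `μ {‖u‖ ≥ 2t}` is at most a multiple of `r ^ (p * s) / t ^ p`. This estimate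
serves twice. With `r` read off a weak-type bound of exponent `a`, it yields a weak-type bound of
exponent `p + θ a`, where `θ = p s / d`; starting from `a = p`, the exponents increase to the fixed
point `p / (1 - θ) = p d / (d - p s)`, the critical exponent, whence a bound in every `L^b` with
`p < b` subcritical. With `r` small and fixed, Chebyshev's inequality on balls turns the vanishing
of the local `L^p` masses into convergence to `0` in measure. In `∫ ‖u‖ ^ q` the small values of
`‖u‖` are then controlled by the `L^p` bound, the large ones by an `L^b` bound with `b > q`, and the
intermediate ones by convergence in measure.
-/

section WeakType

variable {X F : Type*} [MeasurableSpace X] [NormedAddCommGroup F] {μ : Measure X} {f : X → F}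
  {p a b A K : ℝ}

/-- The weak-type `L^a` bound: the distribution function of `‖f‖` at height `t` is at most
`K / t ^ a`. Unlike a strong `L^a` bound, it is produced directly by an estimate on level sets. -/
def HasWeakLpBound (μ : Measure X) (f : X → F) (a K : ℝ) : Prop :=
  ∀ t, 0 < t → μ {x | t ≤ ‖f x‖} ≤ ENNReal.ofReal (K / t ^ a)

theorem nullMeasurableSet_le_norm (hf : AEStronglyMeasurable f μ) (t : ℝ) :
    NullMeasurableSet {x | t ≤ ‖f x‖} μ :=
  nullMeasurableSet_le aemeasurable_const hf.norm.aemeasurable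

theorem mul_measure_le_lintegral {s : Set X} (hs : NullMeasurableSet s μ) {c : ℝ≥0∞}
    {g : X → ℝ≥0∞} (hg : ∀ x ∈ s, c ≤ g x) : c * μ s ≤ ∫⁻ x, g x ∂μ :=
  calc c * μ s = ∫⁻ _ in s, c ∂μ := (setLIntegral_const s c).symm
    _ ≤ ∫⁻ x in s, g x ∂μ := lintegral_mono_ae ((ae_restrict_mem₀ hs).mono hg)
    _ ≤ ∫⁻ x, g x ∂μ := setLIntegral_le_lintegral s g

theorem le_ofReal_div_of_ofReal_mul_le {m : ℝ≥0∞} {x y : ℝ} (hx : 0 < x)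
    (h : ENNReal.ofReal x * m ≤ ENNReal.ofReal y) : m ≤ ENNReal.ofReal (y / x) := by
  rw [ENNReal.ofReal_div_of_pos hx]
  exact ENNReal.le_div_iff_mul_le (.inl (by simpa using hx)) (.inl ENNReal.ofReal_ne_top)
    |>.2 (mul_comm m _ ▸ h)

theorem hasWeakLpBound_of_lintegral_rpow_le (hf : AEStronglyMeasurable f μ) (hp : 0 ≤ p)
    (hA : ∫⁻ x, ENNReal.ofReal (‖f x‖ ^ p) ∂μ ≤ ENNReal.ofReal A) : HasWeakLpBound μ f p A := by
  intro t ht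
  refine le_ofReal_div_of_ofReal_mul_le (by positivity) (le_trans ?_ hA)
  refine mul_measure_le_lintegral (nullMeasurableSet_le_norm hf t) fun x hx => ?_
  exact ENNReal.ofReal_le_ofReal (Real.rpow_le_rpow ht.le hx hp)

theorem lintegral_Ioc_zero_one_rpow {s : ℝ} (hs : -1 < s) :
    ∫⁻ t in Ioc (0 : ℝ) 1, ENNReal.ofReal (t ^ s) = ENNReal.ofReal (1 / (s + 1)) := by
  have hint : IntegrableOn (fun t : ℝ => t ^ s) (Ioc 0 1) :=
    (intervalIntegral.intervalIntegrable_rpow' hs).1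
  rw [← ofReal_integral_eq_lintegral_ofReal hint
      ((ae_restrict_mem measurableSet_Ioc).mono fun t ht => Real.rpow_nonneg ht.1.le s),
    ← intervalIntegral.integral_of_le zero_le_one, integral_rpow (.inl hs),
    Real.one_rpow, Real.zero_rpow (by linarith), sub_zero]

theorem lintegral_Ioi_one_rpow {s : ℝ} (hs : s < -1) :
    ∫⁻ t in Ioi (1 : ℝ), ENNReal.ofReal (t ^ s) = ENNReal.ofReal (-1 / (s + 1)) := by
  rw [← ofReal_integral_eq_lintegral_ofReal (integrableOn_Ioi_rpow_of_lt hs one_pos)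
      ((ae_restrict_mem measurableSet_Ioi).mono fun t ht =>
        Real.rpow_nonneg (zero_le_one.trans (le_of_lt ht)) s),
    integral_Ioi_rpow_of_lt hs one_pos, Real.one_rpow]

theorem HasWeakLpBound.setLIntegral_le (hK : HasWeakLpBound μ f a K) {s : Set ℝ}
    (hs : MeasurableSet s) (hs0 : s ⊆ Ioi 0) (b : ℝ) :
    ∫⁻ t in s, μ {x | t ≤ ‖f x‖} * ENNReal.ofReal (t ^ (b - 1)) ≤
      ENNReal.ofReal K * ∫⁻ t in s, ENNReal.ofReal (t ^ (b - a - 1)) := by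
  rw [← lintegral_const_mul _ (by fun_prop)]
  refine setLIntegral_mono' hs fun t hts => ?_
  have ht : 0 < t := hs0 hts
  calc μ {x | t ≤ ‖f x‖} * ENNReal.ofReal (t ^ (b - 1))
      ≤ ENNReal.ofReal (K / t ^ a) * ENNReal.ofReal (t ^ (b - 1)) := by gcongr; exact hK t ht
    _ = ENNReal.ofReal K * ENNReal.ofReal (t ^ (b - a - 1)) := by
      rw [← ENNReal.ofReal_mul' (by positivity), ← ENNReal.ofReal_mul' (by positivity),
        show b - a - 1 = (b - 1) - a by ring, Real.rpow_sub ht (b - 1) a]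
      ring_nf

theorem lintegral_rpow_le_of_hasWeakLpBound (hf : AEStronglyMeasurable f μ) (hb : 0 < b)
    (hpb : p < b) (hba : b < a) (hA : HasWeakLpBound μ f p A) (hK : HasWeakLpBound μ f a K) :
    ∫⁻ x, ENNReal.ofReal (‖f x‖ ^ b) ∂μ ≤
      ENNReal.ofReal b * (ENNReal.ofReal A * ENNReal.ofReal (1 / (b - p)) +
        ENNReal.ofReal K * ENNReal.ofReal (1 / (a - b))) := by
  rw [lintegral_rpow_eq_lintegral_meas_le_mul μ (.of_forall fun x => norm_nonneg (f x))
    hf.norm.aemeasurable hb, ← Ioc_union_Ioi_eq_Ioi (zero_le_one' ℝ)]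
  refine mul_le_mul_right ((lintegral_union_le _ _ _).trans (add_le_add ?_ ?_)) _
  · refine (hA.setLIntegral_le measurableSet_Ioc Ioc_subset_Ioi_self b).trans_eq ?_
    rw [lintegral_Ioc_zero_one_rpow (by linarith), sub_add_cancel]
  · refine (hK.setLIntegral_le measurableSet_Ioi (Ioi_subset_Ioi zero_le_one) b).trans_eq ?_
    rw [lintegral_Ioi_one_rpow (by linarith), sub_add_cancel, ← neg_sub a b, neg_div_neg_eq]

end WeakType

section Interpolation

variable {X F ι : Type*} [MeasurableSpace X] [NormedAddCommGroup F] {μ : Measure X} {f : X → F}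
  {p q b A B : ℝ}

theorem rpow_le_rpow_add_rpow_add_indicator {y τ T : ℝ} (hy : 0 ≤ y) (hτ : 0 < τ)
    (hT : 0 < T) (hq : 0 < q) (hpq : p ≤ q) (hqb : q ≤ b) :
    y ^ q ≤ τ ^ (q - p) * y ^ p + T ^ (q - b) * y ^ b + (Ici τ).indicator (fun _ => T ^ q) y := by
  have h_ind : 0 ≤ (Ici τ).indicator (fun _ => T ^ q) y :=
    indicator_nonneg (fun _ _ => by positivity) y
  obtain rfl | hy := hy.eq_or_lt
  · rw [Real.zero_rpow hq.ne']
    positivity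
  have h_split (r : ℝ) : y ^ q = y ^ (q - r) * y ^ r := by
    rw [← Real.rpow_add hy, sub_add_cancel]
  obtain hyτ | hτy := lt_or_ge y τ
  · have : y ^ q ≤ τ ^ (q - p) * y ^ p := by
      rw [h_split p]
      gcongr
    have : 0 ≤ T ^ (q - b) * y ^ b := by positivity
    linarith
  have : 0 ≤ τ ^ (q - p) * y ^ p := by positivity
  obtain hyT | hTy := le_or_gt y T
  · have : y ^ q ≤ (Ici τ).indicator (fun _ => T ^ q) y := by
      rw [indicator_of_mem (mem_Ici.2 hτy)]
      gcongr
    have : 0 ≤ T ^ (q - b) * y ^ b := by positivity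
    linarith
  · have : y ^ q ≤ T ^ (q - b) * y ^ b := by
      rw [h_split b]
      gcongr ?_ * _
      exact Real.rpow_le_rpow_of_nonpos hT hTy.le (by linarith)
    linarith

theorem lintegral_rpow_le_add_add_measure (hf : AEStronglyMeasurable f μ) (hq : 0 < q)
    (hpq : p ≤ q) (hqb : q ≤ b) {τ T : ℝ} (hτ : 0 < τ) (hT : 0 < T) :
    ∫⁻ x, ENNReal.ofReal (‖f x‖ ^ q) ∂μ ≤
      ENNReal.ofReal (τ ^ (q - p)) * ∫⁻ x, ENNReal.ofReal (‖f x‖ ^ p) ∂μ +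
        ENNReal.ofReal (T ^ (q - b)) * ∫⁻ x, ENNReal.ofReal (‖f x‖ ^ b) ∂μ +
        ENNReal.ofReal (T ^ q) * μ {x | τ ≤ ‖f x‖} := by
  have h_meas (r : ℝ) : AEMeasurable (fun x => ENNReal.ofReal (‖f x‖ ^ r)) μ :=
    (hf.norm.aemeasurable.pow_const r).ennreal_ofReal
  have h_set := nullMeasurableSet_le_norm hf τ
  rw [← lintegral_indicator_const₀ h_set, ← lintegral_const_mul'' _ (h_meas p),
    ← lintegral_const_mul'' _ (h_meas b), ← lintegral_add_left' ((h_meas p).const_mul _),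
    ← lintegral_add_right' _ (aemeasurable_const.indicator₀ h_set)]
  refine lintegral_mono fun x => ?_
  refine (ENNReal.ofReal_le_ofReal (rpow_le_rpow_add_rpow_add_indicator (norm_nonneg (f x))
    hτ hT hq hpq hqb)).trans (ENNReal.ofReal_add_le.trans (add_le_add ?_ ?_))
  · rw [← ENNReal.ofReal_mul (by positivity), ← ENNReal.ofReal_mul (by positivity)]
    exact ENNReal.ofReal_add_le
  · by_cases hx : τ ≤ ‖f x‖ <;> simp [indicator, hx]

theorem tendsto_ofReal_mul_of_tendsto_zero {l : Filter ι} {g : ι → ℝ} (hg : Tendsto g l (𝓝 0))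
    (A : ℝ) : Tendsto (fun i => ENNReal.ofReal (g i) * ENNReal.ofReal A) l (𝓝 0) := by
  simpa using ENNReal.Tendsto.mul_const (ENNReal.tendsto_ofReal hg) (.inr ENNReal.ofReal_ne_top)

theorem tendsto_lintegral_rpow_of_tendstoInMeasure {l : Filter ι} {u : ι → X → F}
    (hu : ∀ i, AEStronglyMeasurable (u i) μ) (hq : 0 < q) (hpq : p < q) (hqb : q < b)
    (hA : ∀ i, ∫⁻ x, ENNReal.ofReal (‖u i x‖ ^ p) ∂μ ≤ ENNReal.ofReal A)
    (hB : ∀ i, ∫⁻ x, ENNReal.ofReal (‖u i x‖ ^ b) ∂μ ≤ ENNReal.ofReal B)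
    (h : TendstoInMeasure μ u l 0) :
    Tendsto (fun i => ∫⁻ x, ENNReal.ofReal (‖u i x‖ ^ q) ∂μ) l (𝓝 0) := by
  rw [ENNReal.tendsto_nhds_zero]
  intro ε hε
  have hε3 : 0 < ε / 3 := ENNReal.div_pos hε.ne' (by norm_num)
  obtain ⟨τ, hτε, hτ⟩ : ∃ τ : ℝ,
      ENNReal.ofReal (τ ^ (q - p)) * ENNReal.ofReal A ≤ ε / 3 ∧ 0 < τ := by
    have h0 : Tendsto (fun τ : ℝ => τ ^ (q - p)) (𝓝[>] 0) (𝓝 0) := by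
      have h_cont := (Real.continuous_rpow_const (sub_pos.2 hpq).le).tendsto 0
      rw [Real.zero_rpow (sub_pos.2 hpq).ne'] at h_cont
      exact h_cont.mono_left nhdsWithin_le_nhds
    exact ((ENNReal.tendsto_nhds_zero.1 (tendsto_ofReal_mul_of_tendsto_zero h0 A) _ hε3).and
      self_mem_nhdsWithin).exists
  obtain ⟨T, hTε, hT⟩ : ∃ T : ℝ,
      ENNReal.ofReal (T ^ (q - b)) * ENNReal.ofReal B ≤ ε / 3 ∧ 0 < T := by
    have h0 : Tendsto (fun T : ℝ => T ^ (q - b)) atTop (𝓝 0) := by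
      simpa only [neg_sub] using tendsto_rpow_neg_atTop (sub_pos.2 hqb)
    exact ((ENNReal.tendsto_nhds_zero.1 (tendsto_ofReal_mul_of_tendsto_zero h0 B) _ hε3).and
      (eventually_gt_atTop 0)).exists
  have h_meas : Tendsto (fun i => ENNReal.ofReal (T ^ q) * μ {x | τ ≤ ‖u i x‖}) l (𝓝 0) := by
    simpa using ENNReal.Tendsto.const_mul (tendstoInMeasure_iff_norm.1 h τ hτ)
      (.inr ENNReal.ofReal_ne_top)
  filter_upwards [ENNReal.tendsto_nhds_zero.1 h_meas _ hε3] with i hi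
  calc ∫⁻ x, ENNReal.ofReal (‖u i x‖ ^ q) ∂μ
      ≤ _ := lintegral_rpow_le_add_add_measure (hu i) hq hpq.le hqb.le hτ hT
    _ ≤ ENNReal.ofReal (τ ^ (q - p)) * ENNReal.ofReal A +
          ENNReal.ofReal (T ^ (q - b)) * ENNReal.ofReal B + ε / 3 := by
      gcongr
      exacts [hA i, hB i]
    _ ≤ ε / 3 + ε / 3 + ε / 3 := by gcongr
    _ = ε := ENNReal.add_thirds ε

end Interpolation

section Gagliardo

variable {X F ι : Type*} [MetricSpace X] [NormedAddCommGroup F] {f : X → F}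
  {c d s p C a K r t : ℝ}

theorem div_le_gagliardo_kernel (hp : 0 ≤ p) (hds : 0 ≤ d + p * s) (ht : 0 < t) {x y : X}
    (hx : 2 * t ≤ ‖f x‖) (hy : ‖f y‖ ≤ t) (hxy : dist x y ≤ r) :
    t ^ p / r ^ (d + p * s) ≤ ‖f x - f y‖ ^ p / dist x y ^ (d + p * s) := by
  have h_jump : t ≤ ‖f x - f y‖ := by linarith [norm_sub_norm_le (f x) (f y)]
  have h_dist : 0 < dist x y := by
    refine dist_pos.2 fun h => ?_
    rw [h, sub_self, norm_zero] at h_jump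
    linarith
  gcongr

variable [MeasurableSpace X] {μ : Measure X}

/-- The `p`-th power of the Gagliardo seminorm of order `s` of `f`, on a metric measure space
whose dimension parameter is `d`. For `p ≠ 0` the diagonal contributes `0`, since `0 / x = 0`
even for `x = 0`. -/
noncomputable def gagliardoEnergy (μ : Measure X) (d s p : ℝ) (f : X → F) : ℝ≥0∞ :=
  ∫⁻ x, ∫⁻ y, ENNReal.ofReal (‖f x - f y‖ ^ p / dist x y ^ (d + p * s)) ∂μ ∂μ

/-- Lower Ahlfors regularity of dimension `d` with constant `c`, imposed at all scales `r > 0`: it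
makes balls large enough that a level set of small measure fills at most half of each of them. -/
structure LowerAhlforsRegular (μ : Measure X) (d c : ℝ) : Prop where
  const_pos : 0 < c
  le_measure_ball : ∀ x r, 0 < r → ENNReal.ofReal (c * r ^ d) ≤ μ (ball x r)

theorem lowerAhlforsRegular_of_isAddHaarMeasure {E : Type*} [NormedAddCommGroup E]
    [NormedSpace ℝ E] [FiniteDimensional ℝ E] [MeasurableSpace E] [BorelSpace E]
    (μ : Measure E) [μ.IsAddHaarMeasure] :
    LowerAhlforsRegular μ (Module.finrank ℝ E) (μ.real (ball 0 1)) where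
  const_pos := ENNReal.toReal_pos (measure_ball_pos μ 0 one_pos).ne' measure_ball_lt_top.ne
  le_measure_ball x r hr := by
    rw [Measure.addHaar_ball_of_pos μ x hr, Real.rpow_natCast, mul_comm,
      ENNReal.ofReal_mul (by positivity), ofReal_measureReal measure_ball_lt_top.ne]

theorem LowerAhlforsRegular.half_le_measure_ball_sdiff (hμ : LowerAhlforsRegular μ d c)
    {S : Set X} (hS : NullMeasurableSet S μ) {x : X} (hr : 0 < r)
    (h : μ (S ∩ ball x r) ≤ ENNReal.ofReal (c * r ^ d / 2)) :
    ENNReal.ofReal (c * r ^ d / 2) ≤ μ (ball x r \ S) := by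
  refine (ENNReal.add_le_add_iff_left (a := ENNReal.ofReal (c * r ^ d / 2))
    ENNReal.ofReal_ne_top).1 ?_
  calc ENNReal.ofReal (c * r ^ d / 2) + ENNReal.ofReal (c * r ^ d / 2)
      = ENNReal.ofReal (c * r ^ d) := by
        rw [ENNReal.ofReal_div_of_pos two_pos, ENNReal.ofReal_ofNat, ENNReal.add_halves]
    _ ≤ μ (ball x r) := hμ.le_measure_ball x r hr
    _ = μ (ball x r ∩ S) + μ (ball x r \ S) := (measure_inter_add_sdiff₀ _ hS).symm
    _ ≤ ENNReal.ofReal (c * r ^ d / 2) + μ (ball x r \ S) := by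
        rw [inter_comm]
        gcongr

variable [OpensMeasurableSpace X]

theorem measure_two_mul_le_norm_le (hμ : LowerAhlforsRegular μ d c) (hp : 0 ≤ p)
    (hds : 0 ≤ d + p * s) (hf : AEStronglyMeasurable f μ)
    (hC : gagliardoEnergy μ d s p f ≤ ENNReal.ofReal C) (hr : 0 < r) (ht : 0 < t)
    (h : ∀ x, μ ({z | t ≤ ‖f z‖} ∩ ball x r) ≤ ENNReal.ofReal (c * r ^ d / 2)) :
    μ {x | 2 * t ≤ ‖f x‖} ≤ ENNReal.ofReal (2 * C / c * r ^ (p * s) / t ^ p) := by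
  have hc := hμ.const_pos
  set S : Set X := {z | t ≤ ‖f z‖}
  have hS : NullMeasurableSet S μ := nullMeasurableSet_le_norm hf t
  have h_inner (x : X) (hx : 2 * t ≤ ‖f x‖) :
      ENNReal.ofReal (t ^ p / r ^ (d + p * s)) * ENNReal.ofReal (c * r ^ d / 2) ≤
        ∫⁻ y, ENNReal.ofReal (‖f x - f y‖ ^ p / dist x y ^ (d + p * s)) ∂μ := by
    refine (mul_le_mul_right (hμ.half_le_measure_ball_sdiff hS hr (h x)) _).trans
      (mul_measure_le_lintegral (measurableSet_ball.nullMeasurableSet.diff hS) ?_)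
    rintro y ⟨hyr, hyS⟩
    exact ENNReal.ofReal_le_ofReal
      (div_le_gagliardo_kernel hp hds ht hx (not_le.1 hyS).le (mem_ball'.1 hyr).le)
  have h_outer := (mul_measure_le_lintegral (nullMeasurableSet_le_norm hf (2 * t)) h_inner).trans hC
  rw [← ENNReal.ofReal_mul (by positivity)] at h_outer
  convert le_ofReal_div_of_ofReal_mul_le (by positivity) h_outer using 2
  rw [Real.rpow_add hr]
  field_simp

theorem HasWeakLpBound.improve (hK : HasWeakLpBound μ f a K) (hK0 : 0 < K)
    (hμ : LowerAhlforsRegular μ d c) (hd : 0 < d) (hp : 0 ≤ p)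
    (hs : 0 ≤ s) (hf : AEStronglyMeasurable f μ)
    (hC : gagliardoEnergy μ d s p f ≤ ENNReal.ofReal C) :
    HasWeakLpBound μ f (p + p * s / d * a)
      (2 * C / c * (2 * K / c) ^ (p * s / d) * 2 ^ (p + p * s / d * a)) := by
  intro t ht
  have hc := hμ.const_pos
  -- `M` solves `c * M / 2 = K / (t / 2) ^ a`, so that `{t / 2 ≤ ‖f‖}` as a whole has at most half
  -- of the volume guaranteed for balls of radius `r = M ^ d⁻¹`.
  set M : ℝ := 2 * K / c / (t / 2) ^ a with hM
  have hM0 : 0 < M := by positivity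
  have h_vol : c * (M ^ d⁻¹) ^ d / 2 = K / (t / 2) ^ a := by
    rw [Real.rpow_inv_rpow hM0.le hd.ne', hM]
    field_simp
  have h_radius : (M ^ d⁻¹) ^ (p * s) =
      (2 * K / c) ^ (p * s / d) / (t / 2) ^ (p * s / d * a) := by
    rw [← Real.rpow_mul hM0.le, hM, Real.div_rpow (by positivity) (by positivity),
      ← Real.rpow_mul (by positivity)]
    ring_nf
  have h_level := measure_two_mul_le_norm_le hμ hp (by positivity) hf hC
    (r := M ^ d⁻¹) (t := t / 2) (by positivity) (by positivity) fun x =>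
      h_vol ▸ (measure_mono inter_subset_left).trans (hK (t / 2) (by positivity))
  rw [mul_div_cancel₀ t two_ne_zero, h_radius] at h_level
  convert h_level using 2
  rw [Real.rpow_add (by positivity : 0 < (2 : ℝ)), Real.rpow_add ht, Real.div_rpow ht.le two_pos.le,
    Real.div_rpow ht.le two_pos.le]
  field_simp

theorem exists_hasWeakLpBound_geom_sum (hμ : LowerAhlforsRegular μ d c)
    (hd : 0 < d) (hp : 0 ≤ p) (hs : 0 ≤ s) (hC0 : 0 < C) (m : ℕ) :
    ∃ K, 0 < K ∧ ∀ f : X → F, AEStronglyMeasurable f μ →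
      gagliardoEnergy μ d s p f ≤ ENNReal.ofReal C →
      ∫⁻ x, ENNReal.ofReal (‖f x‖ ^ p) ∂μ ≤ ENNReal.ofReal C →
      HasWeakLpBound μ f (p * ∑ j ∈ Finset.range (m + 1), (p * s / d) ^ j) K := by
  induction m with
  | zero => exact ⟨C, hC0, fun f hf _ hLp => by
      simpa using hasWeakLpBound_of_lintegral_rpow_le hf hp hLp⟩
  | succ m ih =>
    obtain ⟨K, hK0, hK⟩ := ih
    have hc := hμ.const_pos
    have h_exponent : p * ∑ j ∈ Finset.range (m + 2), (p * s / d) ^ j =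
        p + p * s / d * (p * ∑ j ∈ Finset.range (m + 1), (p * s / d) ^ j) := by
      rw [geom_sum_succ]
      ring
    rw [h_exponent]
    exact ⟨_, by positivity, fun f hf hG hLp =>
      (hK f hf hG hLp).improve hK0 hμ hd hp hs hf hG⟩

theorem exists_lt_mul_geom_sum {q : ℝ} (hd : 0 < d) (hps : 0 ≤ p * s) (hpsd : p * s < d)
    (hq : q < p * d / (d - p * s)) :
    ∃ m : ℕ, q < p * ∑ j ∈ Finset.range (m + 1), (p * s / d) ^ j := by
  have h_geom := (hasSum_geometric_of_lt_one (div_nonneg hps hd.le)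
    ((div_lt_one hd).2 hpsd)).mul_left p
  have h_limit : p * (1 - p * s / d)⁻¹ = p * d / (d - p * s) := by
    have := sub_pos.2 hpsd
    field_simp
  rw [h_limit] at h_geom
  simp_rw [Finset.mul_sum]
  exact (((tendsto_add_atTop_iff_nat 1).2 h_geom.tendsto_sum_nat).eventually_const_lt hq).exists

theorem exists_lintegral_rpow_le_of_gagliardoEnergy_le {b : ℝ} (hμ : LowerAhlforsRegular μ d c)
    (hp : 0 < p) (hs : 0 < s) (hpsd : p * s < d) (hpb : p < b)
    (hb : b < p * d / (d - p * s)) (C : ℝ) :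
    ∃ B, ∀ f : X → F, AEStronglyMeasurable f μ →
      gagliardoEnergy μ d s p f ≤ ENNReal.ofReal C →
      ∫⁻ x, ENNReal.ofReal (‖f x‖ ^ p) ∂μ ≤ ENNReal.ofReal C →
      ∫⁻ x, ENNReal.ofReal (‖f x‖ ^ b) ∂μ ≤ ENNReal.ofReal B := by
  have hd : 0 < d := (mul_pos hp hs).trans hpsd
  obtain ⟨m, hm⟩ := exists_lt_mul_geom_sum hd (mul_pos hp hs).le hpsd hb
  obtain ⟨K, -, hK⟩ := exists_hasWeakLpBound_geom_sum (F := F) (C := max C 1) hμ hd hp.le hs.le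
    (by positivity) m
  have hCmax : ENNReal.ofReal C ≤ ENNReal.ofReal (max C 1) :=
    ENNReal.ofReal_le_ofReal (le_max_left C 1)
  refine ⟨_, fun f hf hG hLp => (lintegral_rpow_le_of_hasWeakLpBound hf (hp.trans hpb) hpb hm
    (hasWeakLpBound_of_lintegral_rpow_le hf hp.le hLp)
    (hK f hf (hG.trans hCmax) (hLp.trans hCmax))).trans_eq (ENNReal.ofReal_toReal ?_).symm⟩
  finiteness

theorem tendstoInMeasure_zero_of_tendsto_iSup_ball {R : ℝ} {l : Filter ι} {u : ι → X → F}
    (hμ : LowerAhlforsRegular μ d c) (hd : 0 ≤ d) (hp : 0 < p) (hs : 0 < s)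
    (hu : ∀ i, AEStronglyMeasurable (u i) μ)
    (hC : ∀ i, gagliardoEnergy μ d s p (u i) ≤ ENNReal.ofReal C) (hR : 0 < R)
    (hvan : Tendsto (fun i => ⨆ y, ∫⁻ x in ball y R, ENNReal.ofReal (‖u i x‖ ^ p) ∂μ) l (𝓝 0)) :
    TendstoInMeasure μ u l 0 := by
  refine tendstoInMeasure_iff_norm.2 fun t ht => ENNReal.tendsto_nhds_zero.2 fun ε hε => ?_
  simp only [Pi.zero_apply, sub_zero]
  obtain ⟨r, hrε, hr, hrR⟩ : ∃ r, ENNReal.ofReal (2 * C / c * r ^ (p * s) / (t / 2) ^ p) ≤ ε ∧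
      r ∈ Ioo 0 R := by
    have h_cont : Continuous fun r : ℝ =>
        ENNReal.ofReal (2 * C / c * r ^ (p * s) / (t / 2) ^ p) :=
      ENNReal.continuous_ofReal.comp
        (((Real.continuous_rpow_const (mul_pos hp hs).le).const_mul _).div_const _)
    have h_zero := h_cont.tendsto 0
    rw [Real.zero_rpow (mul_pos hp hs).ne', mul_zero, zero_div, ENNReal.ofReal_zero] at h_zero
    exact ((ENNReal.tendsto_nhds_zero.1 (h_zero.mono_left nhdsWithin_le_nhds) ε hε).and
      (Ioo_mem_nhdsGT hR)).exists
  have hc := hμ.const_pos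
  have hδ : 0 < ENNReal.ofReal (c * r ^ d / 2 * (t / 2) ^ p) := by positivity
  filter_upwards [hvan.eventually_le_const hδ] with i hi
  have h_ball (y : X) :
      μ ({z | t / 2 ≤ ‖u i z‖} ∩ ball y r) ≤ ENNReal.ofReal (c * r ^ d / 2) := by
    have h_mass : ∫⁻ x in ball y r, ENNReal.ofReal (‖u i x‖ ^ p) ∂μ ≤
        ENNReal.ofReal (c * r ^ d / 2 * (t / 2) ^ p) :=
      (lintegral_mono_set (ball_subset_ball hrR.le)).trans ((le_iSup _ y).trans hi)
    have h_weak := hasWeakLpBound_of_lintegral_rpow_le (hu i).restrict hp.le h_mass (t / 2)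
      (by positivity)
    rw [mul_div_cancel_right₀ _ (by positivity)] at h_weak
    exact (Measure.le_restrict_apply _ _).trans h_weak
  have h_level := measure_two_mul_le_norm_le hμ hp.le (by positivity) (hu i) (hC i) hr
    (by positivity) h_ball
  rw [mul_div_cancel₀ t two_ne_zero] at h_level
  exact h_level.trans hrε

end Gagliardo

section Vanishing

variable {X F ι : Type*} [MeasurableSpace X] [NormedAddCommGroup F] {μ : Measure X}

theorem iSup_setLIntegral_ofReal_le {κ : Type*} {g : X → ℝ} (hg : Integrable g μ)
    (hg0 : 0 ≤ g) (s : κ → Set X) :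
    ⨆ y, ∫⁻ x in s y, ENNReal.ofReal (g x) ∂μ ≤ ENNReal.ofReal (⨆ y, ∫ x in s y, g x ∂μ) := by
  have h_bdd : BddAbove (range fun y => ∫ x in s y, g x ∂μ) := by
    refine ⟨∫ x, g x ∂μ, ?_⟩
    rintro _ ⟨y, rfl⟩
    exact setIntegral_le_integral hg (.of_forall hg0)
  refine iSup_le fun y => ?_
  rw [← ofReal_integral_eq_lintegral_ofReal hg.integrableOn (.of_forall hg0)]
  exact ENNReal.ofReal_le_ofReal (le_ciSup h_bdd y)

theorem integrable_norm_rpow_of_lintegral_le {f : X → F} {p C : ℝ}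
    (hf : AEStronglyMeasurable f μ)
    (hC : ∫⁻ x, ENNReal.ofReal (‖f x‖ ^ p) ∂μ ≤ ENNReal.ofReal C) :
    Integrable (fun x => ‖f x‖ ^ p) μ :=
  ⟨(hf.norm.aemeasurable.pow_const p).aestronglyMeasurable,
    (hasFiniteIntegral_iff_ofReal (.of_forall fun x => by positivity)).2
      (hC.trans_lt ENNReal.ofReal_lt_top)⟩

theorem stmt15_general [MetricSpace X] [OpensMeasurableSpace X] {c d s p : ℝ}
    (hμ : LowerAhlforsRegular μ d c) (hp : 0 < p) (hs : 0 < s) (hpsd : p * s < d)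
    {l : Filter ι} {u : ι → X → F} (hu : ∀ i, AEStronglyMeasurable (u i) μ) {C : ℝ}
    (hC : ∀ i, gagliardoEnergy μ d s p (u i) + ∫⁻ x, ENNReal.ofReal (‖u i x‖ ^ p) ∂μ ≤
      ENNReal.ofReal C)
    {R : ℝ} (hR : 0 < R)
    (hvan : Tendsto (fun i => ⨆ y, ∫ x in ball y R, ‖u i x‖ ^ p ∂μ) l (𝓝 0))
    {q : ℝ} (hpq : p < q) (hq : q < p * d / (d - p * s)) :
    Tendsto (fun i => ∫⁻ x, ENNReal.ofReal (‖u i x‖ ^ q) ∂μ) l (𝓝 0) := by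
  have hG (i : ι) := le_self_add.trans (hC i)
  have hLp (i : ι) := le_add_self.trans (hC i)
  have hd : 0 ≤ d := (mul_pos hp hs).le.trans hpsd.le
  have hvan' : Tendsto (fun i => ⨆ y, ∫⁻ x in ball y R, ENNReal.ofReal (‖u i x‖ ^ p) ∂μ) l (𝓝 0) :=
    tendsto_of_tendsto_of_tendsto_of_le_of_le tendsto_const_nhds
      (by simpa using ENNReal.tendsto_ofReal hvan) (fun _ => zero_le) fun i =>
        iSup_setLIntegral_ofReal_le (integrable_norm_rpow_of_lintegral_le (hu i) (hLp i))
          (fun _ => by positivity) _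
  obtain ⟨b, hqb, hb⟩ := exists_between hq
  obtain ⟨B, hB⟩ := exists_lintegral_rpow_le_of_gagliardoEnergy_le (F := F) hμ hp hs hpsd
    (hpq.trans hqb) hb C
  exact tendsto_lintegral_rpow_of_tendstoInMeasure hu (hp.trans hpq) hpq hqb hLp
    (fun i => hB (u i) (hu i) (hG i) (hLp i))
    (tendstoInMeasure_zero_of_tendsto_iSup_ball hμ hd hp hs hu hG hR hvan')

end Vanishing

theorem stmt15 (n : ℕ) (hn : 2 ≤ n) (α : ℝ) (hα : α ∈ Set.Ioo (0:ℝ) 1)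
    (u : ℕ → EuclideanSpace ℝ (Fin n) → ℝ) (hmeas : ∀ k, Measurable (u k))
    (C : ℝ)
    (hbdd : ∀ k,
      (∫⁻ x, ∫⁻ z,
          ENNReal.ofReal (|u k x - u k z| ^ 2 / ‖x - z‖ ^ ((n : ℝ) + 2 * α)))
        + (∫⁻ x, ENNReal.ofReal ((u k x) ^ 2)) ≤ ENNReal.ofReal C)
    (R : ℝ) (hR : 0 < R)
    (hvan : Tendsto (fun k => ⨆ y : EuclideanSpace ℝ (Fin n),
        ∫ x in ball y R, (u k x) ^ 2) atTop (𝓝 0)) :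
    ∀ q : ℝ, 2 < q → q < 2 * n / (n - 2 * α) →
      Tendsto (fun k => ∫⁻ x, ENNReal.ofReal (|u k x| ^ q)) atTop (𝓝 0) := by
  intro q hq2 hq
  have h2n : (2 : ℝ) ≤ n := by exact_mod_cast hn
  have hμ := lowerAhlforsRegular_of_isAddHaarMeasure (volume : Measure (EuclideanSpace ℝ (Fin n)))
  rw [finrank_euclideanSpace_fin] at hμ
  exact stmt15_general hμ two_pos hα.1 (by linarith [hα.2])
    (fun k => (hmeas k).aestronglyMeasurable)
    (by simpa [gagliardoEnergy, dist_eq_norm] using hbdd) hR (by simpa using hvan) hq2 hq
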